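/- Theorem 3 (output agreement with optimal steady-state control allocation). Assume G_i = I_n for every node (so m = n). Let I_c = I_{11} ∪ I_{21}, let Q_i ∈ ℝ^{n×n} be symmetric positive definite for i ∈ I_c, fix y* ∈ ℝ^n, and set λ = −(Σ_{i∈I_c} Q_i^{-1})^{-1}(Σ_{i=1}^N (J_i − R_i)y* + Σ_{i=1}^N δ_i). Assume the feasibility condition: there exist x̄ ∈ (Ω_n)^N with ∇H_{n,i}(x̄_i) = y* for all i, and η̄ ∈ (Ω_e)^M such that 0 = (J_i − R_i)y* − (B_i ⊗ I_n)∇H_e(η̄) + Q_i^{-1}λ + δ_i for every i ∈ I_c and 0 = (J_i − R_i)y* − (B_i ⊗ I_n)∇H_e(η̄) + δ_i for every i ∈ I_{12} ∪ I_{22}. Let G_c be a connected undirected communication graph on I_c and consider the distributed controller ξ̇_i = Σ_{\{i,j\}∈E_c}(ξ_j − ξ_i) + Q_i^{-1}(y* − ∇H_{n,i}(x_i)), u_i = Q_i^{-1}ξ_i, for i ∈ I_c; set ξ̄_i = λ for all i ∈ I_c. Then there exists an open set U of initial conditions containing (x̄, η̄, ξ̄) such that every solution (x, η, ξ) of the closed-loop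 system with initial condition in U is defined for all t ≥ 0 and converges as t → ∞ to an equilibrium at which ∇H_{n,i}(x̃_i) = y* for every node i; moreover, for every i ∈ I_c the control u_i(t) = Q_i^{-1}ξ_i(t) converges to ū_i = Q_i^{-1}λ, which minimizes (1/2)Σ_{i∈I_c} ū_iᵀQ_iū_i subject to Σ_{i∈I_c} ū_i = −(Σ_{i=1}^N (J_i − R_i)y* + Σ_{i=1}^N δ_i). -/

import Mathlib

open Matrix Filter Topology Set

/-- The gradient of `H : ℝ^p → ℝ` in coordinates: `(∇H(x))_j = DH(x)[e_j]`. -/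
noncomputable def grad {p : ℕ} (H : (Fin p → ℝ) → ℝ) (x : Fin p → ℝ) : Fin p → ℝ :=
  fun j => fderiv ℝ H x (Pi.single j 1)

/-!
In terms of the efforts `e = (∇H_n(x), ∇H_e(η), ξ)` the closed loop reads `ż = L e + d`, where
`⟨e, L e⟩ ≤ 0` and algebraic nodes have rate zero. Hence the Bregman divergence from the state to an
equilibrium `p`, taken over the dynamic components, has derivative `⟨e - e_p, L (e - e_p)⟩ ≤ 0`. It
traps nearby solutions in a compact set, and Barbalat's lemma shows that the power tends to zero.
Zero power pins down the effort or the rate of every component. Where it pins down the effort of a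
dynamic component, the component converges, and a second use of Barbalat's lemma gives that its rate
tends to zero too. Cluster points are therefore equilibria, and taking the divergence to a cluster
point as the new Lyapunov function makes the solution converge.

At zero power, strict damping forces all outputs to `y*`, and connectedness forces all controller
states to agree. Summing the node equations eliminates the edges and identifies the common value
as `λ`.
-/

section Asymptotics

variable {a : ℝ}

theorem tendsto_zero_of_uniformContinuousOn_deriv {E : Type*} [NormedAddCommGroup E]
    [NormedSpace ℝ E] {f g : ℝ → E} {y : E}
    (hf : ∀ t ∈ Ici a, HasDerivWithinAt f (g t) (Ici a) t) (hfy : Tendsto f atTop (𝓝 y))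
    (hg : UniformContinuousOn g (Ici a)) : Tendsto g atTop (𝓝 0) := by
  rw [Metric.uniformContinuousOn_iff_le] at hg
  refine Metric.tendsto_nhds.2 fun ε hε => ?_
  obtain ⟨h, h_pos, hgh⟩ := hg (ε / 2) (half_pos hε)
  have increment_small : ∀ᶠ t in atTop, ‖f (t + h) - f t‖ < ε / 2 * h := by
    have : Tendsto (fun t => ‖f (t + h) - f t‖) atTop (𝓝 0) := by
      simpa using ((hfy.comp (tendsto_atTop_add_const_right _ h tendsto_id)).sub hfy).norm
    exact this.eventually_lt_const (by positivity)
  filter_upwards [increment_small, eventually_ge_atTop a] with t ht hat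
  have linearization_error : ‖f (t + h) - f t - h • g t‖ ≤ ε / 2 * h := by
    have deriv_error : ∀ s ∈ Icc t (t + h),
        HasDerivWithinAt (fun s => f s - s • g t) (g s - g t) (Icc t (t + h)) s := fun s hs =>
      ((hf s (hat.trans hs.1)).mono fun r hr => hat.trans hr.1).sub <| by
        simpa using (hasDerivWithinAt_id s _).smul_const (g t)
    have := (convex_Icc t (t + h)).norm_image_sub_le_of_norm_hasDerivWithin_le deriv_error
      (fun s hs => by
        rw [← dist_eq_norm]
        refine hgh s (hat.trans hs.1) t hat ?_
        rw [Real.dist_eq, abs_of_nonneg (sub_nonneg.2 hs.1)]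
        linarith [hs.2])
      (left_mem_Icc.2 (by linarith)) (right_mem_Icc.2 (by linarith))
    rw [add_sub_cancel_left, Real.norm_of_nonneg h_pos.le] at this
    convert this using 2
    module
  have : h * ‖g t‖ < h * ε := calc
    h * ‖g t‖ = ‖(f (t + h) - f t) - (f (t + h) - f t - h • g t)‖ := by
      rw [sub_sub_cancel, norm_smul, Real.norm_of_nonneg h_pos.le]
    _ ≤ ‖f (t + h) - f t‖ + ‖f (t + h) - f t - h • g t‖ := norm_sub_le _ _
    _ < h * ε := by linarith
  simpa using lt_of_mul_lt_mul_left this h_pos.le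

theorem forall_mem_of_forall_mem_closure {X : Type*} [TopologicalSpace X] {u : ℝ → X} {G : Set X}
    (hu : ContinuousOn u (Ici a)) (hG : IsOpen G) (ha : u a ∈ G)
    (h : ∀ T ∈ Ici a, (∀ t ∈ Icc a T, u t ∈ closure G) → u T ∈ G) : ∀ t ∈ Ici a, u t ∈ G := by
  by_contra! hexit
  let exits := Ici a ∩ u ⁻¹' Gᶜ
  have closed_exits : IsClosed exits :=
    hu.preimage_isClosed_of_isClosed isClosed_Ici hG.isClosed_compl
  have bdd : BddBelow exits := ⟨a, fun t ht => ht.1⟩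
  let T := sInf exits
  have first_exit : T ∈ exits := closed_exits.csInf_mem hexit bdd
  have before_exit : MapsTo u (Ico a T) G := fun t ht => by
    by_contra htG
    exact ht.2.not_ge (csInf_le bdd ⟨ht.1, htG⟩)
  have haT : a ≠ T := fun haT => first_exit.2 (haT ▸ ha)
  refine first_exit.2 (h T first_exit.1 fun t ht => ?_)
  have hcont : ContinuousWithinAt u (Ico a T) t := (hu t ht.1).mono Ico_subset_Ici_self
  exact hcont.mem_closure (by rwa [closure_Ico haT]) before_exit

theorem tendsto_of_antitoneOn_of_mapClusterPt {f : ℝ → ℝ} {y : ℝ} (hf : AntitoneOn f (Ici a))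
    (hy : MapClusterPt y atTop f) : Tendsto f atTop (𝓝 y) := by
  refine tendsto_order.2 ⟨fun b hb => ?_, fun b hb => ?_⟩
  · filter_upwards [eventually_ge_atTop a] with t ht
    by_contra! htb
    have below : ∀ᶠ s in atTop, f s ≤ b := by
      filter_upwards [eventually_ge_atTop t] with s hs
      exact (hf ht (ht.trans hs) hs).trans htb
    obtain ⟨s, hs, hs'⟩ := ((hy.frequently (Ioi_mem_nhds hb)).and_eventually below).exists
    exact hs'.not_gt hs
  · obtain ⟨t, ht, hat⟩ :=
      ((hy.frequently (Iio_mem_nhds hb)).and_eventually (eventually_ge_atTop a)).exists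
    filter_upwards [eventually_ge_atTop t] with s hs
    exact (hf hat (hat.trans hs) hs).trans_lt ht

end Asymptotics

section CompactRange

variable {α X Y Z : Type*} {l : Filter α} {u : α → X} [TopologicalSpace X] [TopologicalSpace Y]
  [T2Space Y]

theorem tendsto_comp_of_isCompact [TopologicalSpace Z] {K : Set X} {φ : X → Y} {g : X → Z}
    {y : Y} {z : Z} (hK : IsCompact K) (hu : ∀ᶠ t in l, u t ∈ K) (hφ : ContinuousOn φ K)
    (hg : ContinuousOn g K) (hφu : Tendsto (φ ∘ u) l (𝓝 y)) (h : ∀ x ∈ K, φ x = y → g x = z) :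
    Tendsto (g ∘ u) l (𝓝 z) := by
  refine tendsto_iff_ultrafilter _ _ _ |>.2 fun U hU => ?_
  have hUK : ∀ᶠ t in U, u t ∈ K := hU hu
  obtain ⟨x, hxK, hx⟩ := hK.ultrafilter_le_nhds (U.map u) (le_principal_iff.2 hUK)
  have hx : Tendsto u U (𝓝[K] x) := tendsto_nhdsWithin_iff.2 ⟨hx, hUK⟩
  rw [← h x hxK (tendsto_nhds_unique ((hφ x hxK).tendsto.comp hx) (hφu.mono_left hU))]
  exact (hg x hxK).tendsto.comp hx

theorem eq_of_mapClusterPt_of_tendsto_comp {φ : X → Y} {x : X} {y : Y} (hx : MapClusterPt x l u)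
    (hφ : ContinuousAt φ x) (hy : Tendsto (φ ∘ u) l (𝓝 y)) : φ x = y := by
  have : MapClusterPt (φ x) l (φ ∘ u) := hx.continuousAt_comp hφ
  exact eq_of_nhds_neBot (ClusterPt.neBot (ClusterPt.mono this hy))

theorem uniformContinuousOn_of_injOn_of_isCompact {E F T : Type*} [MetricSpace E] [MetricSpace F]
    [UniformSpace T] {K : Set E} {f : E → F} {w : T → E} {s : Set T} (hK : IsCompact K)
    (hf : ContinuousOn f K) (hinj : InjOn f K) (hw : MapsTo w s K)
    (hfw : UniformContinuousOn (f ∘ w) s) : UniformContinuousOn w s := by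
  unfold UniformContinuousOn at hfw ⊢
  rw [tendsto_uniformity_iff_dist_tendsto_zero] at hfw ⊢
  refine tendsto_comp_of_isCompact (u := Prod.map w w)
    (φ := fun q : E × E => dist (f q.1) (f q.2)) (g := fun q : E × E => dist q.1 q.2)
    (hK.prod hK) ?_ ?_
    continuous_dist.continuousOn hfw fun q hq hfq => ?_
  · filter_upwards [mem_inf_of_right (mem_principal_self (s ×ˢ s))] with q hq
    exact ⟨hw hq.1, hw hq.2⟩
  · exact continuous_dist.comp_continuousOn ((hf.comp continuousOn_fst fun q hq => hq.1).prodMk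
      (hf.comp continuousOn_snd fun q hq => hq.2))
  · exact dist_eq_zero.2 (hinj hq.1 hq.2 (dist_eq_zero.1 hfq))

end CompactRange

section StrictPotential

variable {p : ℕ} {Ω : Set (Fin p → ℝ)} {H : (Fin p → ℝ) → ℝ} {x y : Fin p → ℝ}

theorem fderiv_apply_eq_grad_dotProduct (H : (Fin p → ℝ) → ℝ) (x v : Fin p → ℝ) :
    fderiv ℝ H x v = grad H x ⬝ᵥ v := by
  conv_lhs => rw [pi_eq_sum_univ' v]
  simp only [map_sum, map_smul, grad, dotProduct, smul_eq_mul, mul_comm]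

/-- The Bregman divergence of `H` from `y` to `x`: the error at `x` of the first-order expansion
of `H` at `y`. It serves as the energy of the state `x` relative to the equilibrium `y`. -/
noncomputable def bregman (H : (Fin p → ℝ) → ℝ) (x y : Fin p → ℝ) : ℝ :=
  H x - H y - grad H y ⬝ᵥ (x - y)

@[simp]
theorem bregman_self (H : (Fin p → ℝ) → ℝ) (x : Fin p → ℝ) : bregman H x x = 0 := by
  simp [bregman]

theorem bregman_add_bregman_swap (H : (Fin p → ℝ) → ℝ) (x y : Fin p → ℝ) :
    bregman H x y + bregman H y x = (grad H x - grad H y) ⬝ᵥ (x - y) := by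
  simp only [bregman, sub_dotProduct, dotProduct_sub]
  ring

/-- `H` is a continuously differentiable, strictly convex Hamiltonian on the open set `Ω`.
Convexity of `Ω` is part of `StrictConvexOn`. -/
structure IsStrictPotential (Ω : Set (Fin p → ℝ)) (H : (Fin p → ℝ) → ℝ) : Prop where
  isOpen : IsOpen Ω
  contDiffOn : ContDiffOn ℝ 1 H Ω
  strictConvexOn : StrictConvexOn ℝ Ω H

namespace IsStrictPotential

variable (h : IsStrictPotential Ω H)
include h

theorem hasFDerivAt (hx : x ∈ Ω) : HasFDerivAt H (fderiv ℝ H x) x :=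
  ((h.contDiffOn.differentiableOn one_ne_zero).differentiableAt (h.isOpen.mem_nhds hx)).hasFDerivAt

theorem continuousOn_grad : ContinuousOn (grad H) Ω :=
  continuousOn_pi.2 fun _ =>
    (h.contDiffOn.continuousOn_fderiv_of_isOpen h.isOpen le_rfl).clm_apply continuousOn_const

theorem bregman_nonneg (hx : x ∈ Ω) (hy : y ∈ Ω) : 0 ≤ bregman H x y := by
  let line : ℝ →ᵃ[ℝ] (Fin p → ℝ) := AffineMap.lineMap y x
  have convex_restriction : ConvexOn ℝ (Icc 0 1) (H ∘ line) :=
    (h.strictConvexOn.convexOn.comp_affineMap line).subset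
      (fun _ ht => h.strictConvexOn.1.lineMap_mem hy hx ht) (convex_Icc 0 1)
  have hasDerivAt_restriction : HasDerivAt (H ∘ line) (grad H y ⬝ᵥ (x - y)) 0 := by
    rw [← fderiv_apply_eq_grad_dotProduct]
    have hline : HasDerivAt line (x - y) 0 := AffineMap.hasDerivAt_lineMap
    refine HasFDerivAt.comp_hasDerivAt 0 ?_ hline
    simpa [line] using h.hasFDerivAt hy
  have := convex_restriction.le_slope_of_hasDerivAt (by simp) (by simp) one_pos
    hasDerivAt_restriction
  simp only [slope_def_field, Function.comp_apply, line, AffineMap.lineMap_apply_one,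
    AffineMap.lineMap_apply_zero, sub_zero, div_one] at this
  exact sub_nonneg.2 this

/- Nonnegativity at the midpoint of `x` and `y` combines with strict convexity there. -/
theorem bregman_pos (hx : x ∈ Ω) (hy : y ∈ Ω) (hxy : x ≠ y) : 0 < bregman H x y := by
  have strict := h.strictConvexOn.2 hx hy hxy one_half_pos one_half_pos (add_halves 1)
  have hmid : (1 / 2 : ℝ) • x + (1 / 2 : ℝ) • y ∈ Ω :=
    h.strictConvexOn.1 hx hy one_half_pos.le one_half_pos.le (add_halves 1)
  have nonneg := h.bregman_nonneg hmid hy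
  have hsub : (1 / 2 : ℝ) • x + (1 / 2 : ℝ) • y - y = (1 / 2 : ℝ) • (x - y) := by module
  rw [bregman, hsub, dotProduct_smul] at nonneg
  rw [bregman]
  simp only [smul_eq_mul] at strict nonneg
  linarith

theorem bregman_eq_zero_iff (hx : x ∈ Ω) (hy : y ∈ Ω) : bregman H x y = 0 ↔ x = y := by
  refine ⟨fun h0 => ?_, fun hxy => hxy ▸ bregman_self H x⟩
  by_contra hxy
  exact (h.bregman_pos hx hy hxy).ne' h0

theorem injOn_grad : InjOn (grad H) Ω := fun x hx y hy hxy => by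
  have := bregman_add_bregman_swap H x y
  rw [hxy, sub_self, zero_dotProduct] at this
  exact (h.bregman_eq_zero_iff hx hy).1
    (by linarith [h.bregman_nonneg hx hy, h.bregman_nonneg hy hx])

theorem hasDerivWithinAt_bregman {u : ℝ → Fin p → ℝ} {u' : Fin p → ℝ} {s : Set ℝ} {t : ℝ}
    (hu : HasDerivWithinAt u u' s t) (ht : u t ∈ Ω) (y : Fin p → ℝ) :
    HasDerivWithinAt (fun r => bregman H (u r) y) ((grad H (u t) - grad H y) ⬝ᵥ u') s t := by
  have hH : HasDerivWithinAt (fun r => H (u r)) (grad H (u t) ⬝ᵥ u') s t :=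
    fderiv_apply_eq_grad_dotProduct H _ _ ▸ (h.hasFDerivAt ht).comp_hasDerivWithinAt t hu
  have hlin : HasDerivWithinAt (fun r => grad H y ⬝ᵥ (u r - y)) (grad H y ⬝ᵥ u') s t :=
    HasDerivWithinAt.fun_sum fun i _ =>
      ((hasDerivWithinAt_pi.1 hu i).sub_const (y i)).const_mul (grad H y i)
  rw [sub_dotProduct]
  exact (hH.sub_const (H y)).sub hlin

theorem continuousOn_bregman (y : Fin p → ℝ) : ContinuousOn (fun x => bregman H x y) Ω := by
  have hdot : Continuous fun x : Fin p → ℝ => grad H y ⬝ᵥ (x - y) :=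
    continuous_const.dotProduct (continuous_id.sub continuous_const)
  exact (h.contDiffOn.continuousOn.sub continuousOn_const).sub hdot.continuousOn

end IsStrictPotential

end StrictPotential

/-- A differential-algebraic port-Hamiltonian system with state `z : ι → ℝⁿ`. The gradients of the
component Hamiltonians, the *efforts* `e`, drive the rates `L e + d`, where `L` is the
`interconnection` and `d` the `source`. The components in `dynamic` evolve with these rates, and
for all other components the rate is an algebraic constraint. -/
structure PortHamiltonianSystem (n : ℕ) (ι : Type*) where
  interconnection : (ι → Fin n → ℝ) →ₗ[ℝ] (ι → Fin n → ℝ)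
  source : ι → Fin n → ℝ
  hamiltonian : ι → (Fin n → ℝ) → ℝ
  domain : ι → Set (Fin n → ℝ)
  dynamic : Finset ι

namespace PortHamiltonianSystem

variable {n : ℕ} {ι : Type*} (S : PortHamiltonianSystem n ι)

/-- The set of states all of whose components lie in the domain of their Hamiltonian. -/
def stateSpace : Set (ι → Fin n → ℝ) := univ.pi S.domain

/-- The vector of efforts, i.e. of the gradients of the component Hamiltonians. -/
noncomputable def effort (z : ι → Fin n → ℝ) : ι → Fin n → ℝ :=
  fun i => grad (S.hamiltonian i) (z i)

/-- The right-hand side of the system: the rate of the dynamic components and the residual of the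
algebraic constraints of the others. -/
noncomputable def flow (z : ι → Fin n → ℝ) : ι → Fin n → ℝ :=
  S.interconnection (S.effort z) + S.source

/-- The states satisfying the algebraic constraints. -/
def constraintSet : Set (ι → Fin n → ℝ) := {z | ∀ i ∉ S.dynamic, S.flow z i = 0}

/-- A state of the state space at which all rates vanish. -/
structure IsEquilibrium (q : ι → Fin n → ℝ) : Prop where
  mem_stateSpace : q ∈ S.stateSpace
  flow_eq_zero : S.flow q = 0

/-- A continuous solution on `[0, ∞)`. It is not required to stay in the state space. -/
structure IsSolution (z : ℝ → ι → Fin n → ℝ) : Prop where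
  continuousOn : ContinuousOn z (Ici 0)
  hasDerivWithinAt : ∀ t ∈ Ici (0 : ℝ), ∀ i ∈ S.dynamic,
    HasDerivWithinAt (fun s => z s i) (S.flow (z t) i) (Ici 0) t
  mem_constraintSet : ∀ t ∈ Ici (0 : ℝ), z t ∈ S.constraintSet

/-- The energy of the dynamic components relative to the state `q`. -/
noncomputable def storage (q z : ι → Fin n → ℝ) : ℝ :=
  ∑ i ∈ S.dynamic, bregman (S.hamiltonian i) (z i) (q i)

/-- The power `⟨e, L e⟩` supplied by the interconnection at the effort vector `e`. -/
noncomputable def power [Fintype ι] (e : ι → Fin n → ℝ) : ℝ := ∑ i, e i ⬝ᵥ S.interconnection e i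

/-- A system with strictly convex Hamiltonians whose interconnection never generates power. Losing
no power determines each component up to a constant: its effort vanishes, as it must for algebraic
components, or its rate does. -/
structure IsDissipative [Fintype ι] : Prop where
  isStrictPotential : ∀ i, IsStrictPotential (S.domain i) (S.hamiltonian i)
  power_nonpos : ∀ e, S.power e ≤ 0
  effort_eq_zero : ∀ i ∉ S.dynamic, ∀ e, S.power e = 0 → e i = 0
  effort_or_rate_eq_zero : ∀ i, (∀ e, S.power e = 0 → e i = 0) ∨
    ∀ e, S.power e = 0 → S.interconnection e i = 0

variable {S} {p q : ι → Fin n → ℝ} {z : ℝ → ι → Fin n → ℝ} {K : Set (ι → Fin n → ℝ)}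

theorem IsEquilibrium.flow_eq (hq : S.IsEquilibrium q) (w : ι → Fin n → ℝ) :
    S.flow w = S.interconnection (S.effort w - S.effort q) := by
  rw [← sub_zero (S.flow w), ← hq.flow_eq_zero, map_sub]
  exact add_sub_add_right_eq_sub _ _ _

@[simp]
theorem storage_self (S : PortHamiltonianSystem n ι) (q : ι → Fin n → ℝ) : S.storage q q = 0 := by
  simp [storage]

theorem continuous_interconnection [Finite ι] (S : PortHamiltonianSystem n ι) :
    Continuous S.interconnection :=
  S.interconnection.continuous_of_finiteDimensional

variable [Fintype ι]

theorem continuous_power (S : PortHamiltonianSystem n ι) : Continuous S.power :=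
  continuous_finsetSum _ fun i _ =>
    (continuous_apply i).dotProduct ((continuous_apply i).comp S.continuous_interconnection)

theorem power_eq_zero_of_interconnection_eq_zero {e : ι → Fin n → ℝ}
    (h : ∀ i, e i = 0 ∨ S.interconnection e i = 0) : S.power e = 0 :=
  Finset.sum_eq_zero fun i _ => by rcases h i with h | h <;> simp [h]

namespace IsDissipative

variable (hS : S.IsDissipative)
include hS

theorem isOpen_stateSpace : IsOpen S.stateSpace :=
  isOpen_set_pi finite_univ fun i _ => (hS.isStrictPotential i).isOpen

theorem continuousOn_effort : ContinuousOn S.effort S.stateSpace :=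
  continuousOn_pi.2 fun i => (hS.isStrictPotential i).continuousOn_grad.comp
    (continuous_apply i).continuousOn fun _ hz => hz i trivial

theorem continuousOn_flow : ContinuousOn S.flow S.stateSpace :=
  (S.continuous_interconnection.comp_continuousOn hS.continuousOn_effort).add continuousOn_const

theorem continuousOn_storage (q : ι → Fin n → ℝ) : ContinuousOn (S.storage q) S.stateSpace :=
  continuousOn_finsetSum _ fun i _ => ((hS.isStrictPotential i).continuousOn_bregman (q i)).comp
    (continuous_apply i).continuousOn fun _ hz => hz i trivial

theorem isCompact_inter_constraintSet (hK : IsCompact K) (hKS : K ⊆ S.stateSpace) :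
    IsCompact (K ∩ S.constraintSet) := by
  have hclosed : IsClosed {w : ι → Fin n → ℝ | ∀ i ∉ S.dynamic, w i = 0} := by
    simp only [ofPred_forall]
    exact isClosed_iInter fun i => isClosed_iInter fun _ =>
      isClosed_eq (continuous_apply i) continuous_const
  exact hK.of_isClosed_subset
    ((hS.continuousOn_flow.mono hKS).preimage_isClosed_of_isClosed hK.isClosed hclosed)
    inter_subset_left

theorem eq_of_dynamic_eq {w v : ι → Fin n → ℝ} (hw : w ∈ S.stateSpace ∩ S.constraintSet)
    (hv : v ∈ S.stateSpace ∩ S.constraintSet) (h : ∀ i ∈ S.dynamic, w i = v i) : w = v := by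
  have lossless : S.power (S.effort w - S.effort v) = 0 := by
    refine power_eq_zero_of_interconnection_eq_zero fun i => ?_
    by_cases hi : i ∈ S.dynamic
    · exact .inl (sub_eq_zero.2 (congrArg (grad (S.hamiltonian i)) (h i hi)))
    · have : S.flow w i - S.flow v i = 0 := by rw [hw.2 i hi, hv.2 i hi, sub_self]
      right
      simpa [flow] using this
  funext i
  by_cases hi : i ∈ S.dynamic
  · exact h i hi
  · exact (hS.isStrictPotential i).injOn_grad (hw.1 i trivial) (hv.1 i trivial)
      (sub_eq_zero.1 (hS.effort_eq_zero i hi _ lossless))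

theorem storage_nonneg (hq : q ∈ S.stateSpace) {w : ι → Fin n → ℝ} (hw : w ∈ S.stateSpace) :
    0 ≤ S.storage q w :=
  Finset.sum_nonneg fun i _ =>
    (hS.isStrictPotential i).bregman_nonneg (hw i trivial) (hq i trivial)

theorem eq_of_storage_eq_zero (hq : S.IsEquilibrium q) {w : ι → Fin n → ℝ}
    (hw : w ∈ S.stateSpace ∩ S.constraintSet) (h : S.storage q w = 0) : w = q := by
  refine hS.eq_of_dynamic_eq hw ⟨hq.mem_stateSpace, fun i _ => congrFun hq.flow_eq_zero i⟩
    fun i hi => ?_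
  have hbregman := (Finset.sum_eq_zero_iff_of_nonneg fun i _ =>
    (hS.isStrictPotential i).bregman_nonneg (hw.1 i trivial) (hq.mem_stateSpace i trivial)).1 h i hi
  exact ((hS.isStrictPotential i).bregman_eq_zero_iff
    (hw.1 i trivial) (hq.mem_stateSpace i trivial)).1 hbregman

theorem hasDerivWithinAt_storage (hz : S.IsSolution z) (hq : S.IsEquilibrium q) {t : ℝ}
    (ht : t ∈ Ici (0 : ℝ)) (hzt : z t ∈ S.stateSpace) :
    HasDerivWithinAt (S.storage q ∘ z) (S.power (S.effort (z t) - S.effort q)) (Ici 0) t := by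
  have hpower : S.power (S.effort (z t) - S.effort q) =
      ∑ i ∈ S.dynamic, (S.effort (z t) i - S.effort q i) ⬝ᵥ S.flow (z t) i := by
    rw [power, ← hq.flow_eq]
    refine (Finset.sum_subset (Finset.subset_univ _) fun i _ hi => ?_).symm
    rw [hz.mem_constraintSet t ht i hi, dotProduct_zero]
  rw [hpower]
  exact HasDerivWithinAt.fun_sum fun i hi => (hS.isStrictPotential i).hasDerivWithinAt_bregman
    (hz.hasDerivWithinAt t ht i hi) (hzt i trivial) (q i)

theorem antitoneOn_storage (hz : S.IsSolution z) (hq : S.IsEquilibrium q) {I : Set ℝ}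
    (hI : Convex ℝ I) (hI0 : I ⊆ Ici 0) (hzI : ∀ t ∈ I, z t ∈ S.stateSpace) :
    AntitoneOn (S.storage q ∘ z) I := by
  have hderiv : ∀ t ∈ I, HasDerivWithinAt (S.storage q ∘ z)
      (S.power (S.effort (z t) - S.effort q)) I t := fun t ht =>
    (hS.hasDerivWithinAt_storage hz hq (hI0 ht) (hzI t ht)).mono hI0
  exact antitoneOn_of_hasDerivWithinAt_nonpos hI (fun t ht => (hderiv t ht).continuousWithinAt)
    (fun t ht => (hderiv t (interior_subset ht)).mono interior_subset)
    fun t _ => hS.power_nonpos _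

theorem exists_storage_lt_forall_mem_closedBall {r : ℝ} (hr : 0 < r) (hp : S.IsEquilibrium p)
    (hball : Metric.closedBall p r ⊆ S.stateSpace) :
    ∃ m > 0, ∀ z, S.IsSolution z → z 0 ∈ Metric.ball p r → S.storage p (z 0) < m →
      ∀ t ∈ Ici (0 : ℝ), z t ∈ Metric.closedBall p r := by
  have sphere_subset : Metric.sphere p r ⊆ S.stateSpace :=
    Metric.sphere_subset_closedBall.trans hball
  obtain ⟨m, hm, barrier⟩ : ∃ m > 0, ∀ w ∈ Metric.sphere p r ∩ S.constraintSet,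
      m ≤ S.storage p w := by
    refine (hS.isCompact_inter_constraintSet (isCompact_sphere p r)
      sphere_subset).exists_forall_le' ((hS.continuousOn_storage p).mono
        (inter_subset_left.trans sphere_subset)) fun w hw => ?_
    refine (hS.storage_nonneg hp.mem_stateSpace (sphere_subset hw.1)).lt_of_ne' fun h0 => ?_
    exact Metric.ne_of_mem_sphere hw.1 hr.ne'
      (hS.eq_of_storage_eq_zero hp ⟨sphere_subset hw.1, hw.2⟩ h0)
  refine ⟨m, hm, fun z hz hz0 hstorage t ht => Metric.ball_subset_closedBall ?_⟩
  refine forall_mem_of_forall_mem_closure hz.continuousOn Metric.isOpen_ball hz0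
    (fun T hT hclosure => ?_) t ht
  have hclosedBall : ∀ s ∈ Icc 0 T, z s ∈ Metric.closedBall p r := fun s hs =>
    Metric.closure_ball_subset_closedBall (hclosure s hs)
  have decrease : S.storage p (z T) ≤ S.storage p (z 0) :=
    hS.antitoneOn_storage hz hp (convex_Icc 0 T) Icc_subset_Ici_self
      (fun s hs => hball (hclosedBall s hs)) (left_mem_Icc.2 hT) (right_mem_Icc.2 hT) hT
  refine Metric.mem_ball.2 ((hclosedBall T (right_mem_Icc.2 hT)).lt_of_ne fun hsphere => ?_)
  exact (decrease.trans_lt hstorage).not_ge (barrier _ ⟨hsphere, hz.mem_constraintSet T hT⟩)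

theorem exists_isOpen_forall_mem_isCompact (hp : S.IsEquilibrium p) :
    ∃ K ⊆ S.stateSpace, IsCompact K ∧ ∃ U, IsOpen U ∧ p ∈ U ∧
      ∀ z, S.IsSolution z → z 0 ∈ U → ∀ t ∈ Ici (0 : ℝ), z t ∈ K := by
  obtain ⟨r, hr, hball⟩ := Metric.nhds_basis_closedBall.mem_iff.1
    (hS.isOpen_stateSpace.mem_nhds hp.mem_stateSpace)
  obtain ⟨m, hm, htrap⟩ := hS.exists_storage_lt_forall_mem_closedBall hr hp hball
  refine ⟨Metric.closedBall p r, hball, isCompact_closedBall p r,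
    Metric.ball p r ∩ S.storage p ⁻¹' Iio m, ?_, ?_, fun z hz h0 => htrap z hz h0.1 h0.2⟩
  · exact ((hS.continuousOn_storage p).mono (Metric.ball_subset_closedBall.trans hball)
      ).isOpen_inter_preimage Metric.isOpen_ball isOpen_Iio
  · exact ⟨Metric.mem_ball_self hr, by simpa using hm⟩

section Convergence

variable (hK : IsCompact K) (hKS : K ⊆ S.stateSpace) (hz : S.IsSolution z)
  (hzK : ∀ t ∈ Ici (0 : ℝ), z t ∈ K)
include hK hKS hz hzK

theorem uniformContinuousOn_solution : UniformContinuousOn z (Ici 0) := by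
  obtain ⟨C, hC⟩ := hK.exists_bound_of_continuousOn (hS.continuousOn_flow.mono hKS)
  have lipschitz_dynamic : LipschitzOnWith C.toNNReal (S.dynamic.restrict ∘ z) (Ici 0) := by
    refine (convex_Ici 0).lipschitzOnWith_of_nnnorm_hasDerivWithin_le
      (f' := S.dynamic.restrict ∘ S.flow ∘ z)
      (fun t ht => hasDerivWithinAt_pi.2 fun i => hz.hasDerivWithinAt t ht i i.2) fun t ht => ?_
    refine NNReal.le_toNNReal_of_coe_le ?_
    refine (pi_norm_le_iff_of_nonneg ((norm_nonneg _).trans (hC _ (hzK t ht)))).2 fun i => ?_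
    exact (norm_le_pi_norm (S.flow (z t)) i).trans (hC _ (hzK t ht))
  refine uniformContinuousOn_of_injOn_of_isCompact (f := S.dynamic.restrict)
    (hS.isCompact_inter_constraintSet hK hKS) ?_ (fun w hw v hv hwv => ?_)
    (fun t ht => ⟨hzK t ht, hz.mem_constraintSet t ht⟩) lipschitz_dynamic.uniformContinuousOn
  · exact (continuous_pi fun i => continuous_apply i.1).continuousOn
  · exact hS.eq_of_dynamic_eq ⟨hKS hw.1, hw.2⟩ ⟨hKS hv.1, hv.2⟩
      fun i hi => congrFun hwv ⟨i, hi⟩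

theorem uniformContinuousOn_comp_solution {Y : Type*} [UniformSpace Y]
    {φ : (ι → Fin n → ℝ) → Y} (hφ : ContinuousOn φ S.stateSpace) :
    UniformContinuousOn (φ ∘ z) (Ici 0) :=
  (hK.uniformContinuousOn_of_continuous (hφ.mono hKS)).comp
    (hS.uniformContinuousOn_solution hK hKS hz hzK) hzK

theorem tendsto_power_zero (hp : S.IsEquilibrium p) :
    Tendsto (fun t => S.power (S.effort (z t) - S.effort p)) atTop (𝓝 0) := by
  obtain ⟨q, hqK, hq⟩ := hK.exists_mapClusterPt (u := z) (f := atTop)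
    (le_principal_iff.2 (mem_map.2 ((eventually_ge_atTop 0).mono hzK)))
  have hstorage : Tendsto (S.storage p ∘ z) atTop (𝓝 (S.storage p q)) :=
    tendsto_of_antitoneOn_of_mapClusterPt
      (hS.antitoneOn_storage hz hp (convex_Ici 0) subset_rfl fun t ht => hKS (hzK t ht))
      (hq.continuousAt_comp ((hS.continuousOn_storage p).continuousAt
        (hS.isOpen_stateSpace.mem_nhds (hKS hqK))))
  exact tendsto_zero_of_uniformContinuousOn_deriv
    (fun t ht => hS.hasDerivWithinAt_storage hz hp ht (hKS (hzK t ht))) hstorage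
    (hS.uniformContinuousOn_comp_solution hK hKS hz hzK
      (S.continuous_power.comp_continuousOn (hS.continuousOn_effort.sub continuousOn_const)))

theorem tendsto_of_power_eq_zero (hp : S.IsEquilibrium p) {Y : Type*} [TopologicalSpace Y]
    {φ : (ι → Fin n → ℝ) → Y} {y : Y} (hφ : ContinuousOn φ S.stateSpace)
    (h : ∀ w ∈ S.stateSpace, S.power (S.effort w - S.effort p) = 0 → φ w = y) :
    Tendsto (φ ∘ z) atTop (𝓝 y) :=
  tendsto_comp_of_isCompact hK ((eventually_ge_atTop 0).mono hzK)
    ((S.continuous_power.comp_continuousOn (hS.continuousOn_effort.sub continuousOn_const)).mono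
      hKS) (hφ.mono hKS) (hS.tendsto_power_zero hK hKS hz hzK hp) fun w hw => h w (hKS hw)

theorem tendsto_flow_zero (hp : S.IsEquilibrium p) : Tendsto (S.flow ∘ z) atTop (𝓝 0) := by
  refine tendsto_pi_nhds.2 fun i => ?_
  have hflow : ContinuousOn (fun w => S.flow w i) S.stateSpace :=
    (continuous_apply i).comp_continuousOn hS.continuousOn_flow
  by_cases hi : i ∈ S.dynamic
  · rcases hS.effort_or_rate_eq_zero i with heffort | hrate
    · have hzi : Tendsto (fun t => z t i) atTop (𝓝 (p i)) :=
        hS.tendsto_of_power_eq_zero hK hKS hz hzK hp (continuous_apply i).continuousOn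
          fun w hw hw0 => (hS.isStrictPotential i).injOn_grad (hw i trivial)
            (hp.mem_stateSpace i trivial) (sub_eq_zero.1 (heffort _ hw0))
      exact tendsto_zero_of_uniformContinuousOn_deriv
        (fun t ht => hz.hasDerivWithinAt t ht i hi) hzi
        (hS.uniformContinuousOn_comp_solution hK hKS hz hzK hflow)
    · refine hS.tendsto_of_power_eq_zero hK hKS hz hzK hp hflow fun w _ hw0 => ?_
      rw [hp.flow_eq]
      exact hrate _ hw0
  · refine tendsto_const_nhds.congr' ?_
    filter_upwards [eventually_ge_atTop 0] with t ht
    exact (hz.mem_constraintSet t ht i hi).symm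

/- A cluster point is an equilibrium, so the storage relative to it may serve as a Lyapunov
function as well. -/
theorem exists_tendsto_isEquilibrium (hp : S.IsEquilibrium p) :
    ∃ q, S.IsEquilibrium q ∧ Tendsto z atTop (𝓝 q) := by
  obtain ⟨q, hqK, hq⟩ := hK.exists_mapClusterPt (u := z) (f := atTop)
    (le_principal_iff.2 (mem_map.2 ((eventually_ge_atTop 0).mono hzK)))
  have hqS : S.stateSpace ∈ 𝓝 q := hS.isOpen_stateSpace.mem_nhds (hKS hqK)
  have hqe : S.IsEquilibrium q := ⟨hKS hqK, eq_of_mapClusterPt_of_tendsto_comp hq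
    (hS.continuousOn_flow.continuousAt hqS) (hS.tendsto_flow_zero hK hKS hz hzK hp)⟩
  have hstorage : Tendsto (S.storage q ∘ z) atTop (𝓝 0) := by
    rw [← S.storage_self q]
    exact tendsto_of_antitoneOn_of_mapClusterPt
      (hS.antitoneOn_storage hz hqe (convex_Ici 0) subset_rfl fun t ht => hKS (hzK t ht))
      (hq.continuousAt_comp ((hS.continuousOn_storage q).continuousAt hqS))
  refine ⟨q, hqe, tendsto_comp_of_isCompact (g := id) (hS.isCompact_inter_constraintSet hK hKS)
    ?_ ((hS.continuousOn_storage q).mono (inter_subset_left.trans hKS)) continuousOn_id hstorage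
    fun w hw => hS.eq_of_storage_eq_zero hqe ⟨hKS hw.1, hw.2⟩⟩
  filter_upwards [eventually_ge_atTop 0] with t ht using ⟨hzK t ht, hz.mem_constraintSet t ht⟩

end Convergence

theorem exists_isOpen_forall_tendsto_isEquilibrium (hp : S.IsEquilibrium p) :
    ∃ U, IsOpen U ∧ p ∈ U ∧ ∀ z, S.IsSolution z → z 0 ∈ U →
      ∃ q, S.IsEquilibrium q ∧ Tendsto z atTop (𝓝 q) := by
  obtain ⟨K, hKS, hK, U, hU, hpU, htrap⟩ := hS.exists_isOpen_forall_mem_isCompact hp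
  exact ⟨U, hU, hpU, fun z hz hz0 =>
    hS.exists_tendsto_isEquilibrium hK hKS hz (htrap z hz hz0) hp⟩

end IsDissipative

end PortHamiltonianSystem

section ControllerStorage

/-- The energy `½ vᵀv` of a controller state. Its gradient is the identity, so the controller
state is its own effort. -/
noncomputable def quadraticPotential {n : ℕ} (v : Fin n → ℝ) : ℝ := 1 / 2 * (v ⬝ᵥ v)

@[simp]
theorem grad_quadraticPotential {n : ℕ} (v : Fin n → ℝ) : grad quadraticPotential v = v := by
  funext j
  have hasFDerivAt_dot := HasFDerivAt.fun_sum (u := Finset.univ) fun i _ =>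
    (hasFDerivAt_apply (𝕜 := ℝ) i v).mul (hasFDerivAt_apply (𝕜 := ℝ) i v)
  have : HasFDerivAt quadraticPotential _ v := hasFDerivAt_dot.const_mul (1 / 2)
  rw [grad, this.fderiv]
  simp [Pi.single_apply, Finset.sum_add_distrib]
  ring

theorem isStrictPotential_quadraticPotential (n : ℕ) :
    IsStrictPotential univ (quadraticPotential (n := n)) where
  isOpen := isOpen_univ
  contDiffOn := by
    refine ContDiff.contDiffOn (contDiff_const.mul (ContDiff.sum fun i _ => ?_))
    exact (contDiff_apply ℝ ℝ i).mul (contDiff_apply ℝ ℝ i)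
  strictConvexOn := by
    refine ⟨convex_univ, fun v _ w _ hvw a b ha hb hab => ?_⟩
    have hpos : 0 < (v - w) ⬝ᵥ (v - w) := by
      simpa using dotProduct_star_self_pos_iff.2 (sub_ne_zero.2 hvw)
    have gap : a * quadraticPotential v + b * quadraticPotential w
        - quadraticPotential (a • v + b • w) = a * b / 2 * ((v - w) ⬝ᵥ (v - w)) := by
      obtain rfl : b = 1 - a := by linarith
      simp only [quadraticPotential, add_dotProduct, dotProduct_add, smul_dotProduct,
        dotProduct_smul, sub_dotProduct, dotProduct_sub, smul_eq_mul, dotProduct_comm w v]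
      ring
    simp only [smul_eq_mul]
    have : 0 < a * b / 2 * ((v - w) ⬝ᵥ (v - w)) := by positivity
    linarith

end ControllerStorage

section Consensus

variable {n : ℕ} {C : Type*} [Fintype C] (G : SimpleGraph C) [DecidableRel G.Adj]

/-- The consensus protocol on `G`, which lets every vertex move towards its neighbours. It is minus
the graph Laplacian, applied coordinatewise. -/
def consensus (ξ : C → Fin n → ℝ) (j : C) : Fin n → ℝ :=
  ∑ l, if G.Adj j l then ξ l - ξ j else 0

theorem consensus_apply [DecidableEq C] (ξ : C → Fin n → ℝ) (j : C) (a : Fin n) :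
    consensus G ξ j a = -(G.lapMatrix ℝ *ᵥ fun l => ξ l a) j := by
  rw [G.lapMatrix_mulVec_apply, neg_sub, G.degree_eq_sum_if_adj, Finset.sum_mul,
    G.neighborFinset_eq_filter, Finset.sum_filter, ← Finset.sum_sub_distrib, consensus,
    Finset.sum_apply]
  exact Finset.sum_congr rfl fun l _ => by split_ifs <;> simp

theorem sum_dotProduct_consensus [DecidableEq C] (ξ : C → Fin n → ℝ) :
    ∑ j, ξ j ⬝ᵥ consensus G ξ j =
      -∑ a, Matrix.toLinearMap₂' ℝ (G.lapMatrix ℝ) (fun j => ξ j a) fun j => ξ j a := by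
  simp only [Matrix.toLinearMap₂'_apply', dotProduct, consensus_apply, mul_neg,
    Finset.sum_neg_distrib]
  rw [Finset.sum_comm]

theorem toLinearMap₂'_lapMatrix_nonneg [DecidableEq C] (v : C → ℝ) :
    0 ≤ Matrix.toLinearMap₂' ℝ (G.lapMatrix ℝ) v v := by
  simpa [Matrix.toLinearMap₂'_apply'] using
    (G.posSemidef_lapMatrix ℝ).dotProduct_mulVec_nonneg v

theorem sum_dotProduct_consensus_nonpos (ξ : C → Fin n → ℝ) :
    ∑ j, ξ j ⬝ᵥ consensus G ξ j ≤ 0 := by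
  classical
  rw [sum_dotProduct_consensus]
  exact neg_nonpos.2 (Finset.sum_nonneg fun a _ => toLinearMap₂'_lapMatrix_nonneg G _)

variable {G}

theorem eq_of_sum_dotProduct_consensus_eq_zero (hG : G.Connected) {ξ : C → Fin n → ℝ}
    (h : ∑ j, ξ j ⬝ᵥ consensus G ξ j = 0) (j l : C) : ξ j = ξ l := by
  classical
  rw [sum_dotProduct_consensus, neg_eq_zero, Finset.sum_eq_zero_iff_of_nonneg
    fun a _ => toLinearMap₂'_lapMatrix_nonneg G _] at h
  exact funext fun a => (G.lapMatrix_toLinearMap₂'_apply'_eq_zero_iff_forall_reachable _).1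
    (h a (Finset.mem_univ a)) j l (hG j l)

theorem consensus_eq_zero {ξ : C → Fin n → ℝ} (h : ∀ j l, ξ j = ξ l) : consensus G ξ = 0 :=
  funext fun j => Finset.sum_eq_zero fun l _ => by rw [h l j, sub_self, ite_self]

end Consensus

/-- A network of nodes `V` coupled along edges `E` and steered by controllers `C`, where controller
`j` acts on the node `site j` and communicates along `graph`. In the notation of the paper,
`damping i = J_i - R_i` and `weight j = Q_j⁻¹`. The nodes in `dynamicNodes` obey differential
equations, the others algebraic ones. -/
structure ControlledNetwork (n : ℕ) (V E C : Type*) where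
  incidence : Matrix V E ℝ
  damping : V → Matrix (Fin n) (Fin n) ℝ
  weight : C → Matrix (Fin n) (Fin n) ℝ
  site : C → V
  graph : SimpleGraph C
  [decidableAdj : DecidableRel graph.Adj]
  disturbance : V → Fin n → ℝ
  setPoint : Fin n → ℝ
  nodeHamiltonian : V → (Fin n → ℝ) → ℝ
  edgeHamiltonian : E → (Fin n → ℝ) → ℝ
  nodeDomain : V → Set (Fin n → ℝ)
  edgeDomain : E → Set (Fin n → ℝ)
  dynamicNodes : Finset V

attribute [instance] ControlledNetwork.decidableAdj

namespace ControlledNetwork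

variable {n : ℕ} {V E C : Type*}

/-- The state of a network with node states `x`, edge states `η` and controller states `ξ`. -/
def join (x : V → Fin n → ℝ) (η : E → Fin n → ℝ) (ξ : C → Fin n → ℝ) : V ⊕ E ⊕ C → Fin n → ℝ :=
  Sum.elim x (Sum.elim η ξ)

theorem continuous_join :
    Continuous fun w : (V → Fin n → ℝ) × (E → Fin n → ℝ) × (C → Fin n → ℝ) =>
      join w.1 w.2.1 w.2.2 := by
  refine continuous_pi ?_
  rintro (i | k | j) <;> simp only [join, Sum.elim_inl, Sum.elim_inr] <;> fun_prop

/-- The potentials are strictly convex, the incidence matrix has vanishing column sums, the damping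
is strict, the controller weights are positive definite, and the controllers communicate along a
connected graph. -/
structure IsWellPosed (N : ControlledNetwork n V E C) [Fintype V] : Prop where
  isStrictPotential_node : ∀ i, IsStrictPotential (N.nodeDomain i) (N.nodeHamiltonian i)
  isStrictPotential_edge : ∀ k, IsStrictPotential (N.edgeDomain k) (N.edgeHamiltonian k)
  sum_incidence : ∀ k, ∑ i, N.incidence i k = 0
  dotProduct_damping_neg : ∀ i, ∀ v ≠ 0, v ⬝ᵥ N.damping i *ᵥ v < 0
  weight_posDef : ∀ j, (N.weight j).PosDef
  connected : N.graph.Connected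

variable [Fintype V] {N : ControlledNetwork n V E C}

namespace IsWellPosed

theorem dotProduct_damping_nonpos (hN : N.IsWellPosed) (i : V) (v : Fin n → ℝ) :
    v ⬝ᵥ N.damping i *ᵥ v ≤ 0 := by
  rcases eq_or_ne v 0 with rfl | hv
  · simp
  · exact (hN.dotProduct_damping_neg i v hv).le

theorem eq_zero_of_sum_weight_mulVec_eq_zero [Fintype C] (hN : N.IsWellPosed)
    {v : Fin n → ℝ} (h : ∑ j, N.weight j *ᵥ v = 0) : v = 0 := by
  have := hN.connected.nonempty
  by_contra hv
  have hpos := (posDef_sum Finset.univ_nonempty fun j _ => hN.weight_posDef j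
    ).dotProduct_mulVec_pos hv
  rw [sum_mulVec, h, dotProduct_zero] at hpos
  exact hpos.false

end IsWellPosed

variable [Fintype E] [Fintype C] [DecidableEq V] (N)

/-- The linear map which the closed loop applies to the efforts. Nodes and edges exchange power
through the incidence matrix, and nodes and controllers through the weights. -/
def interconnection : (V ⊕ E ⊕ C → Fin n → ℝ) →ₗ[ℝ] (V ⊕ E ⊕ C → Fin n → ℝ) where
  toFun e := join
    (fun i => N.damping i *ᵥ e (.inl i) - ∑ k, N.incidence i k • e (.inr (.inl k))
      + ∑ j, if N.site j = i then N.weight j *ᵥ e (.inr (.inr j)) else 0)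
    (fun k => ∑ i, N.incidence i k • e (.inl i))
    (fun j => consensus N.graph (fun l => e (.inr (.inr l))) j
      - N.weight j *ᵥ e (.inl (N.site j)))
  map_add' e f := by
    funext i
    rcases i with i | k | j
    · simp only [join, Sum.elim_inl, Pi.add_apply, mulVec_add, smul_add, Finset.sum_add_distrib,
        ite_add_zero]
      abel
    · simp only [join, Sum.elim_inl, Sum.elim_inr, Pi.add_apply, smul_add, Finset.sum_add_distrib]
    · simp only [join, Sum.elim_inr, Pi.add_apply, mulVec_add, consensus, add_sub_add_comm,
        ite_add_zero, Finset.sum_add_distrib]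
  map_smul' c e := by
    funext i
    rcases i with i | k | j
    · simp only [join, Sum.elim_inl, Pi.smul_apply, mulVec_smul, smul_comm _ c, smul_add,
        smul_sub, Finset.smul_sum, smul_ite, smul_zero, RingHom.id_apply]
    · simp only [join, Sum.elim_inl, Sum.elim_inr, Pi.smul_apply, smul_comm _ c, Finset.smul_sum,
        RingHom.id_apply]
    · simp only [join, Sum.elim_inr, Pi.smul_apply, mulVec_smul, consensus, smul_sub,
        Finset.smul_sum, smul_ite, smul_zero, RingHom.id_apply]

/-- The network in closed loop with its controllers. The set point enters as a source at the
controllers, each of which has energy `½ ξᵀξ`. -/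
noncomputable def closedLoop : PortHamiltonianSystem n (V ⊕ E ⊕ C) where
  interconnection := N.interconnection
  source := join N.disturbance 0 fun j => N.weight j *ᵥ N.setPoint
  hamiltonian := Sum.elim N.nodeHamiltonian (Sum.elim N.edgeHamiltonian fun _ => quadraticPotential)
  domain := Sum.elim N.nodeDomain (Sum.elim N.edgeDomain fun _ => univ)
  dynamic := N.dynamicNodes.disjSum Finset.univ

variable {N}

theorem power_closedLoop (hW : ∀ j, (N.weight j).IsHermitian) (e : V ⊕ E ⊕ C → Fin n → ℝ) :
    N.closedLoop.power e = ∑ i, e (.inl i) ⬝ᵥ N.damping i *ᵥ e (.inl i) +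
      ∑ j, e (.inr (.inr j)) ⬝ᵥ consensus N.graph (fun l => e (.inr (.inr l))) j := by
  have edge_power : ∑ i, e (.inl i) ⬝ᵥ (∑ k, N.incidence i k • e (.inr (.inl k))) =
      ∑ k, e (.inr (.inl k)) ⬝ᵥ ∑ i, N.incidence i k • e (.inl i) := by
    simp only [dotProduct_sum, dotProduct_smul]
    rw [Finset.sum_comm]
    simp only [dotProduct_comm]
  have control_power : ∑ i, e (.inl i) ⬝ᵥ
      (∑ j, if N.site j = i then N.weight j *ᵥ e (.inr (.inr j)) else 0) =
      ∑ j, e (.inr (.inr j)) ⬝ᵥ N.weight j *ᵥ e (.inl (N.site j)) := by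
    simp only [dotProduct_sum, apply_ite, dotProduct_zero]
    rw [Finset.sum_comm]
    refine Finset.sum_congr rfl fun j _ => ?_
    rw [Finset.sum_ite_eq, if_pos (Finset.mem_univ _), dotProduct_mulVec, dotProduct_comm,
      ← mulVec_transpose, ← conjTranspose_eq_transpose_of_trivial, hW j]
  simp only [PortHamiltonianSystem.power, closedLoop, interconnection, LinearMap.coe_mk,
    AddHom.coe_mk, join, Fintype.sum_sum_type, Sum.elim_inl, Sum.elim_inr, dotProduct_add,
    dotProduct_sub, Finset.sum_add_distrib, Finset.sum_sub_distrib, edge_power, control_power]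
  ring

namespace IsWellPosed

variable (hN : N.IsWellPosed)
include hN

theorem power_closedLoop_nonpos (e : V ⊕ E ⊕ C → Fin n → ℝ) : N.closedLoop.power e ≤ 0 := by
  rw [power_closedLoop fun j => (hN.weight_posDef j).isHermitian]
  exact add_nonpos (Finset.sum_nonpos fun i _ => hN.dotProduct_damping_nonpos i _)
    (sum_dotProduct_consensus_nonpos _ _)

theorem effort_eq_of_power_eq_zero {e : V ⊕ E ⊕ C → Fin n → ℝ} (he : N.closedLoop.power e = 0) :
    (∀ i, e (.inl i) = 0) ∧ ∀ j l, e (.inr (.inr j)) = e (.inr (.inr l)) := by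
  rw [power_closedLoop fun j => (hN.weight_posDef j).isHermitian] at he
  have hnode := Finset.sum_nonpos fun i (_ : i ∈ Finset.univ) =>
    hN.dotProduct_damping_nonpos i (e (.inl i))
  have hcontroller := sum_dotProduct_consensus_nonpos N.graph fun j => e (.inr (.inr j))
  refine ⟨fun i => ?_, eq_of_sum_dotProduct_consensus_eq_zero hN.connected (by linarith)⟩
  by_contra hi
  have := (Finset.sum_eq_zero_iff_of_nonpos fun i _ => hN.dotProduct_damping_nonpos i _).1
    (by linarith) i (Finset.mem_univ i)
  exact (hN.dotProduct_damping_neg i _ hi).ne this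

theorem isDissipative : N.closedLoop.IsDissipative where
  isStrictPotential
    | .inl i => hN.isStrictPotential_node i
    | .inr (.inl k) => hN.isStrictPotential_edge k
    | .inr (.inr _) => isStrictPotential_quadraticPotential n
  power_nonpos := hN.power_closedLoop_nonpos
  effort_eq_zero
    | .inl i, _, _, he => (hN.effort_eq_of_power_eq_zero he).1 i
    | .inr _, hj, _, _ => absurd (Finset.inr_mem_disjSum.2 (Finset.mem_univ _)) hj
  effort_or_rate_eq_zero
    | .inl i => .inl fun _ he => (hN.effort_eq_of_power_eq_zero he).1 i
    | .inr (.inl k) => .inr fun e he => by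
      simp [closedLoop, interconnection, join, (hN.effort_eq_of_power_eq_zero he).1]
    | .inr (.inr j) => .inr fun e he => by
      simp [closedLoop, interconnection, join, (hN.effort_eq_of_power_eq_zero he).1,
        consensus_eq_zero (hN.effort_eq_of_power_eq_zero he).2]

/- Summing the node equations eliminates the edges. -/
theorem effort_eq_zero_of_interconnection_eq_zero {e : V ⊕ E ⊕ C → Fin n → ℝ}
    (he : N.interconnection e = 0) :
    (∀ i, e (.inl i) = 0) ∧ ∀ j, e (.inr (.inr j)) = 0 := by
  obtain ⟨hnode, hagree⟩ := hN.effort_eq_of_power_eq_zero (e := e) <|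
    PortHamiltonianSystem.power_eq_zero_of_interconnection_eq_zero fun i => .inr (congrFun he i)
  refine ⟨hnode, fun j => hN.eq_zero_of_sum_weight_mulVec_eq_zero ?_⟩
  have balance : ∑ i, N.interconnection e (.inl i) = 0 := by simp [he]
  have edges_cancel : ∑ i, ∑ k, N.incidence i k • e (.inr (.inl k)) = 0 := by
    rw [Finset.sum_comm]
    simp [← Finset.sum_smul, hN.sum_incidence]
  simp only [interconnection, LinearMap.coe_mk, AddHom.coe_mk, join, Sum.elim_inl, hnode,
    mulVec_zero, Finset.sum_add_distrib, Finset.sum_sub_distrib, edges_cancel,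
    Finset.sum_const_zero, sub_zero, zero_add] at balance
  rw [Finset.sum_comm] at balance
  simpa [hagree _ j] using balance

theorem eq_of_isEquilibrium {x x' : V → Fin n → ℝ} {η η' : E → Fin n → ℝ} {ξ ξ' : C → Fin n → ℝ}
    (h : N.closedLoop.IsEquilibrium (join x η ξ))
    (h' : N.closedLoop.IsEquilibrium (join x' η' ξ')) :
    x' = x ∧ ξ' = ξ := by
  obtain ⟨hnode, hcontroller⟩ := hN.effort_eq_zero_of_interconnection_eq_zero
    ((h.flow_eq _).symm.trans h'.flow_eq_zero)
  constructor
  · exact funext fun i => (hN.isStrictPotential_node i).injOn_grad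
      (h'.mem_stateSpace (.inl i) trivial) (h.mem_stateSpace (.inl i) trivial)
      (sub_eq_zero.1 (hnode i))
  · refine funext fun j => sub_eq_zero.1 ?_
    simpa [PortHamiltonianSystem.effort, closedLoop, join] using hcontroller j

theorem exists_isOpen_forall_tendsto {x₀ : V → Fin n → ℝ} {η₀ : E → Fin n → ℝ}
    {ξ₀ : C → Fin n → ℝ} (h₀ : N.closedLoop.IsEquilibrium (join x₀ η₀ ξ₀)) :
    ∃ U, IsOpen U ∧ (x₀, η₀, ξ₀) ∈ U ∧
      ∀ x η ξ, N.closedLoop.IsSolution (fun t => join (x t) (η t) (ξ t)) → (x 0, η 0, ξ 0) ∈ U →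
        ∃ η₁, N.closedLoop.IsEquilibrium (join x₀ η₁ ξ₀) ∧ Tendsto x atTop (𝓝 x₀) ∧
          Tendsto η atTop (𝓝 η₁) ∧ Tendsto ξ atTop (𝓝 ξ₀) := by
  obtain ⟨U, hU, hU₀, hconv⟩ := hN.isDissipative.exists_isOpen_forall_tendsto_isEquilibrium h₀
  refine ⟨_, hU.preimage continuous_join, hU₀, fun x η ξ hsol hinit => ?_⟩
  obtain ⟨q, hq, hlim⟩ := hconv _ hsol hinit
  obtain ⟨x₁, η₁, ξ₁, rfl⟩ : ∃ x₁ η₁ ξ₁, q = join x₁ η₁ ξ₁ :=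
    ⟨fun i => q (.inl i), fun k => q (.inr (.inl k)), fun j => q (.inr (.inr j)), by
      funext i; rcases i with i | k | j <;> rfl⟩
  obtain ⟨rfl, rfl⟩ := hN.eq_of_isEquilibrium h₀ hq
  rw [tendsto_pi_nhds] at hlim
  exact ⟨η₁, hq, tendsto_pi_nhds.2 fun i => hlim (.inl i),
    tendsto_pi_nhds.2 fun k => hlim (.inr (.inl k)),
    tendsto_pi_nhds.2 fun j => hlim (.inr (.inr j))⟩

end IsWellPosed

section Flow

variable {x : V → Fin n → ℝ} {η : E → Fin n → ℝ} {ξ : C → Fin n → ℝ}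

theorem flow_join_inl_site (hsite : Function.Injective N.site) (j : C) :
    N.closedLoop.flow (join x η ξ) (.inl (N.site j)) =
      N.damping (N.site j) *ᵥ grad (N.nodeHamiltonian (N.site j)) (x (N.site j))
        - ∑ k, N.incidence (N.site j) k • grad (N.edgeHamiltonian k) (η k)
        + N.weight j *ᵥ ξ j + N.disturbance (N.site j) := by
  classical
  simp [PortHamiltonianSystem.flow, PortHamiltonianSystem.effort, closedLoop, interconnection, join,
    hsite.eq_iff]

theorem flow_join_inl_of_site_ne {i : V} (hi : ∀ j, N.site j ≠ i) :
    N.closedLoop.flow (join x η ξ) (.inl i) =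
      N.damping i *ᵥ grad (N.nodeHamiltonian i) (x i)
        - ∑ k, N.incidence i k • grad (N.edgeHamiltonian k) (η k) + N.disturbance i := by
  simp [PortHamiltonianSystem.flow, PortHamiltonianSystem.effort, closedLoop, interconnection, join,
    hi]

theorem flow_join_inr_inl (k : E) :
    N.closedLoop.flow (join x η ξ) (.inr (.inl k)) =
      ∑ i, N.incidence i k • grad (N.nodeHamiltonian i) (x i) := by
  simp [PortHamiltonianSystem.flow, PortHamiltonianSystem.effort, closedLoop, interconnection, join]

theorem flow_join_inr_inr (j : C) :
    N.closedLoop.flow (join x η ξ) (.inr (.inr j)) = consensus N.graph ξ j +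
      N.weight j *ᵥ (N.setPoint - grad (N.nodeHamiltonian (N.site j)) (x (N.site j))) := by
  simp [PortHamiltonianSystem.flow, PortHamiltonianSystem.effort, closedLoop, interconnection, join,
    mulVec_sub, sub_add_eq_add_sub, add_sub_assoc]

end Flow

theorem isSolution_join {x : ℝ → V → Fin n → ℝ} {η : ℝ → E → Fin n → ℝ} {ξ : ℝ → C → Fin n → ℝ}
    (hcont : ContinuousOn (fun t => (x t, η t, ξ t)) (Ici 0))
    (hdyn : ∀ t ∈ Ici (0 : ℝ), ∀ i ∈ N.dynamicNodes, HasDerivWithinAt (fun s => x s i)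
      (N.closedLoop.flow (join (x t) (η t) (ξ t)) (.inl i)) (Ici 0) t)
    (halg : ∀ t ∈ Ici (0 : ℝ), ∀ i ∉ N.dynamicNodes,
      N.closedLoop.flow (join (x t) (η t) (ξ t)) (.inl i) = 0)
    (hedge : ∀ t ∈ Ici (0 : ℝ), ∀ k, HasDerivWithinAt (fun s => η s k)
      (∑ i, N.incidence i k • grad (N.nodeHamiltonian i) (x t i)) (Ici 0) t)
    (hctrl : ∀ t ∈ Ici (0 : ℝ), ∀ j, HasDerivWithinAt (fun s => ξ s j) (consensus N.graph (ξ t) j +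
      N.weight j *ᵥ (N.setPoint - grad (N.nodeHamiltonian (N.site j)) (x t (N.site j))))
      (Ici 0) t) :
    N.closedLoop.IsSolution fun t => join (x t) (η t) (ξ t) where
  continuousOn := continuous_join.comp_continuousOn hcont
  hasDerivWithinAt
    | t, ht, .inl i, hi => hdyn t ht i (Finset.inl_mem_disjSum.1 hi)
    | t, ht, .inr (.inl k), _ => by
      rw [flow_join_inr_inl]
      exact hedge t ht k
    | t, ht, .inr (.inr j), _ => by
      rw [flow_join_inr_inr]
      exact hctrl t ht j
  mem_constraintSet
    | t, ht, .inl i, hi => halg t ht i fun h => hi (Finset.inl_mem_disjSum.2 h)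
    | _, _, .inr _, hj => absurd (Finset.inr_mem_disjSum.2 (Finset.mem_univ _)) hj

theorem isEquilibrium_join_iff {x : V → Fin n → ℝ} {η : E → Fin n → ℝ} {ξ : C → Fin n → ℝ} :
    N.closedLoop.IsEquilibrium (join x η ξ) ↔
      (∀ i, x i ∈ N.nodeDomain i) ∧ (∀ k, η k ∈ N.edgeDomain k) ∧
      (∀ i, N.closedLoop.flow (join x η ξ) (.inl i) = 0) ∧
      (∀ k, ∑ i, N.incidence i k • grad (N.nodeHamiltonian i) (x i) = 0) ∧
      ∀ j, consensus N.graph ξ j +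
        N.weight j *ᵥ (N.setPoint - grad (N.nodeHamiltonian (N.site j)) (x (N.site j))) = 0 := by
  simp only [← flow_join_inr_inl (η := η) (ξ := ξ), ← flow_join_inr_inr (η := η)]
  constructor
  · rintro ⟨hmem, hflow⟩
    exact ⟨fun i => hmem (.inl i) trivial, fun k => hmem (.inr (.inl k)) trivial,
      fun i => congrFun hflow _, fun k => congrFun hflow _, fun j => congrFun hflow _⟩
  · rintro ⟨hx, hη, hnode, hedge, hctrl⟩
    refine ⟨?_, ?_⟩
    · rintro (i | k | j) -
      exacts [hx i, hη k, mem_univ _]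
    · funext i
      rcases i with i | k | j
      exacts [hnode i, hedge k, hctrl j]

theorem IsWellPosed.isEquilibrium_join_of_grad_eq_setPoint (hN : N.IsWellPosed)
    {x : V → Fin n → ℝ} {η : E → Fin n → ℝ} {v : Fin n → ℝ} (hx : ∀ i, x i ∈ N.nodeDomain i)
    (hη : ∀ k, η k ∈ N.edgeDomain k) (hout : ∀ i, grad (N.nodeHamiltonian i) (x i) = N.setPoint)
    (hnode : ∀ i, N.closedLoop.flow (join x η fun _ => v) (.inl i) = 0) :
    N.closedLoop.IsEquilibrium (join x η fun _ => v) :=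
  N.isEquilibrium_join_iff.2 ⟨hx, hη, hnode,
    fun k => by simp [hout, ← Finset.sum_smul, hN.sum_incidence],
    fun j => by simp [hout, consensus_eq_zero]⟩

end ControlledNetwork

theorem dotProduct_sub_mulVec_neg {m : Type*} [Fintype m] {J R : Matrix m m ℝ} (hJ : Jᵀ = -J)
    (hR : R.PosDef) {v : m → ℝ} (hv : v ≠ 0) : v ⬝ᵥ (J - R) *ᵥ v < 0 := by
  have skew : v ⬝ᵥ J *ᵥ v = -(v ⬝ᵥ J *ᵥ v) := by
    conv_lhs => rw [dotProduct_mulVec, ← mulVec_transpose, hJ, neg_mulVec, neg_dotProduct,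
      dotProduct_comm]
  have hpos := hR.dotProduct_mulVec_pos hv
  rw [star_trivial] at hpos
  rw [sub_mulVec, dotProduct_sub]
  linarith

section Allocation

variable {m C : Type*} [Fintype m] [DecidableEq m] [Fintype C] {Q : C → Matrix m m ℝ}

theorem sum_mulVec_inv_sum_mulVec [Nonempty C] (hQ : ∀ j, (Q j).PosDef) (v : m → ℝ) :
    ∑ j, Q j *ᵥ ((∑ l, Q l)⁻¹ *ᵥ v) = v := by
  have hdet : IsUnit (∑ l, Q l).det := (isUnit_iff_isUnit_det _).1
    (posDef_sum Finset.univ_nonempty fun l _ => hQ l).isUnit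
  rw [← sum_mulVec, mulVec_mulVec, mul_nonsing_inv _ hdet, one_mulVec]

/- At `ū_j = Q_j⁻¹ lam` all marginal costs `Q_j ū_j` equal `lam`, so to first order the cost only
depends on the sum of the inputs. -/
theorem sum_dotProduct_mulVec_inv_mulVec_le (hQ : ∀ j, (Q j).PosDef) {lam : m → ℝ} {u : C → m → ℝ}
    (hu : ∑ j, u j = ∑ j, (Q j)⁻¹ *ᵥ lam) :
    ∑ j, ((Q j)⁻¹ *ᵥ lam) ⬝ᵥ (Q j *ᵥ ((Q j)⁻¹ *ᵥ lam)) ≤ ∑ j, u j ⬝ᵥ (Q j *ᵥ u j) := by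
  have marginal_cost : ∀ j, Q j *ᵥ ((Q j)⁻¹ *ᵥ lam) = lam := fun j => by
    rw [mulVec_mulVec, mul_nonsing_inv _ ((isUnit_iff_isUnit_det _).1 (hQ j).isUnit), one_mulVec]
  have cost_ge : ∀ j, ((Q j)⁻¹ *ᵥ lam) ⬝ᵥ (Q j *ᵥ ((Q j)⁻¹ *ᵥ lam)) +
      2 * ((u j - (Q j)⁻¹ *ᵥ lam) ⬝ᵥ lam) ≤ u j ⬝ᵥ (Q j *ᵥ u j) := fun j => by
    have hdiff : 0 ≤ (u j - (Q j)⁻¹ *ᵥ lam) ⬝ᵥ (Q j *ᵥ (u j - (Q j)⁻¹ *ᵥ lam)) := by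
      simpa using (hQ j).posSemidef.dotProduct_mulVec_nonneg (u j - (Q j)⁻¹ *ᵥ lam)
    have hcross : ((Q j)⁻¹ *ᵥ lam) ⬝ᵥ (Q j *ᵥ u j) = u j ⬝ᵥ lam := by
      rw [dotProduct_mulVec, ← mulVec_transpose, ← conjTranspose_eq_transpose_of_trivial,
        (hQ j).isHermitian, marginal_cost, dotProduct_comm]
    rw [mulVec_sub, sub_dotProduct, dotProduct_sub, dotProduct_sub, hcross, marginal_cost] at hdiff
    rw [marginal_cost, sub_dotProduct]
    linarith
  have total := Finset.sum_le_sum fun j (_ : j ∈ Finset.univ) => cost_ge j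
  rw [Finset.sum_add_distrib, ← Finset.mul_sum, ← sum_dotProduct, Finset.sum_sub_distrib, hu,
    sub_self, zero_dotProduct] at total
  linarith

end Allocation

theorem output_agreement_optimal_distributed_control_general
    {n : ℕ} {V E : Type*} [Fintype V] [DecidableEq V] [Fintype E] (B : Matrix V E ℝ)
    (hB1 : ∀ k, ∑ i, B i k = 0)
    (J R : V → Matrix (Fin n) (Fin n) ℝ)
    (hJ : ∀ i, (J i)ᵀ = -(J i)) (hR : ∀ i, (R i).PosDef)
    (δ : V → Fin n → ℝ)
    (Ωn : V → Set (Fin n → ℝ)) (hΩno : ∀ i, IsOpen (Ωn i))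
    (Ωe : E → Set (Fin n → ℝ)) (hΩeo : ∀ k, IsOpen (Ωe k))
    (Hn : V → (Fin n → ℝ) → ℝ)
    (hHnC : ∀ i, ContDiffOn ℝ 1 (Hn i) (Ωn i))
    (hHnconv : ∀ i, StrictConvexOn ℝ (Ωn i) (Hn i))
    (He : E → (Fin n → ℝ) → ℝ)
    (hHeC : ∀ k, ContDiffOn ℝ 1 (He k) (Ωe k))
    (hHeconv : ∀ k, StrictConvexOn ℝ (Ωe k) (He k))
    (I11 I12 I21 I22 : Finset V)
    (hpart : I11 ∪ I12 ∪ I21 ∪ I22 = Finset.univ)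
    (h1112 : Disjoint I11 I12) (h1122 : Disjoint I11 I22)
    (h1221 : Disjoint I12 I21) (h2122 : Disjoint I21 I22)
    (Q : {i // i ∈ I11 ∪ I21} → Matrix (Fin n) (Fin n) ℝ)
    (hQ : ∀ i, (Q i).PosDef)
    (ystar : Fin n → ℝ) (lam : Fin n → ℝ)
    (hlam : lam = -((∑ i : {i // i ∈ I11 ∪ I21}, (Q i)⁻¹)⁻¹ *ᵥ
      (∑ i, (J i - R i) *ᵥ ystar + ∑ i, δ i)))
    (xbar : V → Fin n → ℝ) (ηbar : E → Fin n → ℝ)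
    (hxbar : ∀ i, xbar i ∈ Ωn i) (hηbar : ∀ k, ηbar k ∈ Ωe k)
    (hxbarout : ∀ i, grad (Hn i) (xbar i) = ystar)
    (hfeasc : ∀ i, ∀ hi : i ∈ I11 ∪ I21, (0 : Fin n → ℝ) =
      (J i - R i) *ᵥ ystar - (∑ k, B i k • grad (He k) (ηbar k))
        + (Q ⟨i, hi⟩)⁻¹ *ᵥ lam + δ i)
    (hfeasu : ∀ i ∈ I12 ∪ I22, (0 : Fin n → ℝ) =
      (J i - R i) *ᵥ ystar - (∑ k, B i k • grad (He k) (ηbar k)) + δ i)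
    (Gc : SimpleGraph {i // i ∈ I11 ∪ I21}) [DecidableRel Gc.Adj]
    (hGc : Gc.Connected) :
    ∃ U : Set ((V → Fin n → ℝ) × (E → Fin n → ℝ) ×
      ({i // i ∈ I11 ∪ I21} → Fin n → ℝ)),
      IsOpen U ∧ (xbar, ηbar, fun _ => lam) ∈ U ∧
      ∀ (x : ℝ → V → Fin n → ℝ) (η : ℝ → E → Fin n → ℝ)
        (ξ : ℝ → {i // i ∈ I11 ∪ I21} → Fin n → ℝ),
        ContinuousOn (fun t => (x t, η t, ξ t)) (Ici 0) →
        (∀ t ∈ Ici (0 : ℝ), ∀ k,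
          HasDerivWithinAt (fun s => η s k)
            (∑ i, B i k • grad (Hn i) (x t i)) (Ici 0) t) →
        (∀ t ∈ Ici (0 : ℝ), ∀ i, ∀ hi : i ∈ I11,
          HasDerivWithinAt (fun s => x s i)
            ((J i - R i) *ᵥ grad (Hn i) (x t i)
              - (∑ k, B i k • grad (He k) (η t k))
              + (Q ⟨i, Finset.mem_union_left _ hi⟩)⁻¹ *ᵥ
                  ξ t ⟨i, Finset.mem_union_left _ hi⟩ + δ i)
            (Ici 0) t) →
        (∀ t ∈ Ici (0 : ℝ), ∀ i ∈ I12,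
          HasDerivWithinAt (fun s => x s i)
            ((J i - R i) *ᵥ grad (Hn i) (x t i)
              - (∑ k, B i k • grad (He k) (η t k)) + δ i)
            (Ici 0) t) →
        (∀ t ∈ Ici (0 : ℝ), ∀ i, ∀ hi : i ∈ I21,
          (0 : Fin n → ℝ) = (J i - R i) *ᵥ grad (Hn i) (x t i)
            - (∑ k, B i k • grad (He k) (η t k))
            + (Q ⟨i, Finset.mem_union_right _ hi⟩)⁻¹ *ᵥ
                ξ t ⟨i, Finset.mem_union_right _ hi⟩ + δ i) →
        (∀ t ∈ Ici (0 : ℝ), ∀ i ∈ I22,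
          (0 : Fin n → ℝ) = (J i - R i) *ᵥ grad (Hn i) (x t i)
            - (∑ k, B i k • grad (He k) (η t k)) + δ i) →
        (∀ t ∈ Ici (0 : ℝ), ∀ i : {i // i ∈ I11 ∪ I21},
          HasDerivWithinAt (fun s => ξ s i)
            ((∑ j, if Gc.Adj i j then ξ t j - ξ t i else 0)
              + (Q i)⁻¹ *ᵥ (ystar - grad (Hn i.1) (x t i.1))) (Ici 0) t) →
        (x 0, η 0, ξ 0) ∈ U →
        (∃ (xt : V → Fin n → ℝ) (ηt : E → Fin n → ℝ)
          (ξt : {i // i ∈ I11 ∪ I21} → Fin n → ℝ),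
          (∀ i, xt i ∈ Ωn i) ∧ (∀ k, ηt k ∈ Ωe k) ∧
          (∀ k, ∑ i, B i k • grad (Hn i) (xt i) = 0) ∧
          (∀ i, ∀ hi : i ∈ I11, (0 : Fin n → ℝ) =
            (J i - R i) *ᵥ grad (Hn i) (xt i)
              - (∑ k, B i k • grad (He k) (ηt k))
              + (Q ⟨i, Finset.mem_union_left _ hi⟩)⁻¹ *ᵥ
                  ξt ⟨i, Finset.mem_union_left _ hi⟩ + δ i) ∧
          (∀ i ∈ I12, (0 : Fin n → ℝ) =
            (J i - R i) *ᵥ grad (Hn i) (xt i)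
              - (∑ k, B i k • grad (He k) (ηt k)) + δ i) ∧
          (∀ i, ∀ hi : i ∈ I21, (0 : Fin n → ℝ) =
            (J i - R i) *ᵥ grad (Hn i) (xt i)
              - (∑ k, B i k • grad (He k) (ηt k))
              + (Q ⟨i, Finset.mem_union_right _ hi⟩)⁻¹ *ᵥ
                  ξt ⟨i, Finset.mem_union_right _ hi⟩ + δ i) ∧
          (∀ i ∈ I22, (0 : Fin n → ℝ) =
            (J i - R i) *ᵥ grad (Hn i) (xt i)
              - (∑ k, B i k • grad (He k) (ηt k)) + δ i) ∧
          (∀ i : {i // i ∈ I11 ∪ I21},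
            (∑ j, if Gc.Adj i j then ξt j - ξt i else 0)
              + (Q i)⁻¹ *ᵥ (ystar - grad (Hn i.1) (xt i.1)) = 0) ∧
          Tendsto x atTop (𝓝 xt) ∧ Tendsto η atTop (𝓝 ηt) ∧
          Tendsto ξ atTop (𝓝 ξt) ∧
          ∀ i, grad (Hn i) (xt i) = ystar) ∧
        (∀ i : {i // i ∈ I11 ∪ I21},
          Tendsto (fun t => (Q i)⁻¹ *ᵥ ξ t i) atTop (𝓝 ((Q i)⁻¹ *ᵥ lam))) ∧
        (∀ u : {i // i ∈ I11 ∪ I21} → Fin n → ℝ,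
          (∑ i, u i) = -(∑ i, (J i - R i) *ᵥ ystar + ∑ i, δ i) →
          (1 / 2) * ∑ i, ((Q i)⁻¹ *ᵥ lam) ⬝ᵥ (Q i *ᵥ ((Q i)⁻¹ *ᵥ lam)) ≤
          (1 / 2) * ∑ i, u i ⬝ᵥ (Q i *ᵥ u i)) := by
  have ctrl_or_free (i) : i ∈ I11 ∪ I21 ∨ i ∈ I12 ∪ I22 := by
    grind [hpart ▸ Finset.mem_univ i]
  have disj : Disjoint (I11 ∪ I21) (I12 ∪ I22) := by simp [h1112, h1122, h1221.symm, h2122]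
  let N : ControlledNetwork n V E {i // i ∈ I11 ∪ I21} :=
    { incidence := B, damping := fun i => J i - R i, weight := fun j => (Q j)⁻¹, site := (↑)
      graph := Gc, disturbance := δ, setPoint := ystar, nodeHamiltonian := Hn
      edgeHamiltonian := He, nodeDomain := Ωn, edgeDomain := Ωe, dynamicNodes := I11 ∪ I12 }
  have wellPosed : N.IsWellPosed := ⟨fun i => ⟨hΩno i, hHnC i, hHnconv i⟩,
    fun k => ⟨hΩeo k, hHeC k, hHeconv k⟩, hB1, fun i _ => dotProduct_sub_mulVec_neg (hJ i) (hR i),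
    fun j => (hQ j).inv, hGc⟩
  have flow_ctrl (x η ξ i) (hi : i ∈ I11 ∪ I21) := N.flow_join_inl_site (x := x) (η := η) (ξ := ξ)
    Subtype.val_injective ⟨i, hi⟩
  have flow_free (x η ξ i) (hi : i ∈ I12 ∪ I22) := N.flow_join_inl_of_site_ne
    (x := x) (η := η) (ξ := ξ) fun j => ne_of_mem_of_not_mem j.2 (Finset.disjoint_right.1 disj hi)
  have equilibrium : N.closedLoop.IsEquilibrium (ControlledNetwork.join xbar ηbar fun _ => lam) :=
    wellPosed.isEquilibrium_join_of_grad_eq_setPoint hxbar hηbar hxbarout fun i => by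
      rcases ctrl_or_free i with hi | hi
      · simpa [flow_ctrl, hi, N, hxbarout] using (hfeasc i hi).symm
      · simpa [flow_free, hi, N, hxbarout] using (hfeasu i hi).symm
  obtain ⟨U, hU, hbar, hconv⟩ := wellPosed.exists_isOpen_forall_tendsto equilibrium
  refine ⟨U, hU, hbar, fun x η ξ hcont hη h11 h12 h21 h22 hξ h0 => ?_⟩
  have solution : N.closedLoop.IsSolution fun t => ControlledNetwork.join (x t) (η t) (ξ t) := by
    refine N.isSolution_join hcont (fun t ht i hi => ?_) (fun t ht i hi => ?_) hη hξ
    · rcases Finset.mem_union.1 hi with hi | hi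
      · exact (h11 t ht i hi).congr_deriv (flow_ctrl _ _ _ i (Finset.mem_union_left _ hi)).symm
      · exact (h12 t ht i hi).congr_deriv (flow_free _ _ _ i (Finset.mem_union_left _ hi)).symm
    · replace hi : i ∉ I11 ∪ I12 := hi
      rcases ctrl_or_free i with h | h
      · exact (flow_ctrl _ _ _ i h).trans (h21 t ht i (by grind)).symm
      · exact (flow_free _ _ _ i h).trans (h22 t ht i (by grind)).symm
  obtain ⟨ηt, limit, hxlim, hηlim, hξlim⟩ := hconv x η ξ solution h0
  obtain ⟨hx, hη, hnode, hedge, hcons⟩ := N.isEquilibrium_join_iff.1 limit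
  have hctrl i hi := (hnode i).symm.trans (flow_ctrl _ _ _ i hi)
  have hfree i hi := (hnode i).symm.trans (flow_free _ _ _ i hi)
  refine ⟨⟨xbar, ηt, fun _ => lam, hx, hη, hedge, fun i _ => hctrl i _,
    fun i hi => hfree i (Finset.mem_union_left _ hi), fun i _ => hctrl i _,
    fun i hi => hfree i (Finset.mem_union_right _ hi), hcons, hxlim, hηlim, hξlim, hxbarout⟩,
    fun i => ?_, fun u hu => ?_⟩
  · exact ((continuous_const.matrix_mulVec continuous_id).tendsto lam).comp
      (tendsto_pi_nhds.1 hξlim i)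
  · have := hGc.nonempty
    refine mul_le_mul_of_nonneg_left (sum_dotProduct_mulVec_inv_mulVec_le hQ ?_) one_half_pos.le
    rw [hu, hlam, ← mulVec_neg, sum_mulVec_inv_sum_mulVec fun j => (hQ j).inv]

/-- Theorem 3: with `G_i = I_n`, under the feasibility condition,
the distributed controller `ξ̇_i = Σ_{{i,j}∈E_c}(ξ_j − ξ_i) + Q_i⁻¹(y* − ∇H_{n,i}(x_i))`,
`u_i = Q_i⁻¹ξ_i` over a connected communication graph locally achieves output
agreement on `y*`, and each `u_i` converges to the optimal steady-state input
`ū_i = Q_i⁻¹λ`, which minimizes `(1/2)Σ ū_iᵀQ_iū_i` subject to the steady-state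
balance constraint. -/
theorem output_agreement_optimal_distributed_control
    {n N M : ℕ} (hn : 0 < n) (hN : 0 < N) (hM : 0 < M)
    (B : Matrix (Fin N) (Fin M) ℝ)
    (hB1 : ∀ k, ∑ i, B i k = 0)
    (hBker : LinearMap.ker (Matrix.mulVecLin Bᵀ) =
      Submodule.span ℝ {(fun _ => (1 : ℝ) : Fin N → ℝ)})
    (J R : Fin N → Matrix (Fin n) (Fin n) ℝ)
    (hJ : ∀ i, (J i)ᵀ = -(J i)) (hR : ∀ i, (R i).PosDef)
    (δ : Fin N → Fin n → ℝ)
    (Ωn : Set (Fin n → ℝ)) (hΩno : IsOpen Ωn) (hΩnc : Convex ℝ Ωn)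
    (Ωe : Set (Fin n → ℝ)) (hΩeo : IsOpen Ωe) (hΩec : Convex ℝ Ωe)
    (Hn : Fin N → (Fin n → ℝ) → ℝ)
    (hHnC : ∀ i, ContDiffOn ℝ 1 (Hn i) Ωn)
    (hHnconv : ∀ i, StrictConvexOn ℝ Ωn (Hn i))
    (He : Fin M → (Fin n → ℝ) → ℝ)
    (hHeC : ∀ k, ContDiffOn ℝ 1 (He k) Ωe)
    (hHeconv : ∀ k, StrictConvexOn ℝ Ωe (He k))
    -- partition of the node set, with I₁₁ nonempty:
    (I11 I12 I21 I22 : Finset (Fin N))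
    (hpart : I11 ∪ I12 ∪ I21 ∪ I22 = Finset.univ)
    (h1112 : Disjoint I11 I12) (h1121 : Disjoint I11 I21)
    (h1122 : Disjoint I11 I22) (h1221 : Disjoint I12 I21)
    (h1222 : Disjoint I12 I22) (h2122 : Disjoint I21 I22)
    (hI11 : I11.Nonempty)
    -- weights of the cost, indexed by the controlled nodes I_c = I₁₁ ∪ I₂₁:
    (Q : {i // i ∈ I11 ∪ I21} → Matrix (Fin n) (Fin n) ℝ)
    (hQ : ∀ i, (Q i).PosDef)
    -- the prescribed set point and the optimal multiplier λ:
    (ystar : Fin n → ℝ) (lam : Fin n → ℝ)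
    (hlam : lam = -((∑ i : {i // i ∈ I11 ∪ I21}, (Q i)⁻¹)⁻¹ *ᵥ
      (∑ i, (J i - R i) *ᵥ ystar + ∑ i, δ i)))
    -- the feasibility condition:
    (xbar : Fin N → Fin n → ℝ) (ηbar : Fin M → Fin n → ℝ)
    (hxbar : ∀ i, xbar i ∈ Ωn) (hηbar : ∀ k, ηbar k ∈ Ωe)
    (hxbarout : ∀ i, grad (Hn i) (xbar i) = ystar)
    (hfeasc : ∀ i, ∀ hi : i ∈ I11 ∪ I21, (0 : Fin n → ℝ) =
      (J i - R i) *ᵥ ystar - (∑ k, B i k • grad (He k) (ηbar k))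
        + (Q ⟨i, hi⟩)⁻¹ *ᵥ lam + δ i)
    (hfeasu : ∀ i ∈ I12 ∪ I22, (0 : Fin n → ℝ) =
      (J i - R i) *ᵥ ystar - (∑ k, B i k • grad (He k) (ηbar k)) + δ i)
    -- the connected undirected communication graph on I_c:
    (Gc : SimpleGraph {i // i ∈ I11 ∪ I21}) [DecidableRel Gc.Adj]
    (hGc : Gc.Connected)
    -- the steady-state controller value ξ̄:
    (ξbar : {i // i ∈ I11 ∪ I21} → Fin n → ℝ)
    (hξbar : ∀ i, ξbar i = lam) :
    ∃ U : Set ((Fin N → Fin n → ℝ) × (Fin M → Fin n → ℝ) ×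
      ({i // i ∈ I11 ∪ I21} → Fin n → ℝ)),
      IsOpen U ∧ (xbar, ηbar, ξbar) ∈ U ∧
      ∀ (x : ℝ → Fin N → Fin n → ℝ) (η : ℝ → Fin M → Fin n → ℝ)
        (ξ : ℝ → {i // i ∈ I11 ∪ I21} → Fin n → ℝ),
        -- (x, η, ξ) is a solution of the closed-loop system on [0, ∞):
        ContinuousOn (fun t => (x t, η t, ξ t)) (Ici 0) →
        (∀ t ∈ Ici (0 : ℝ), ∀ k,
          HasDerivWithinAt (fun s => η s k)
            (∑ i, B i k • grad (Hn i) (x t i)) (Ici 0) t) →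
        (∀ t ∈ Ici (0 : ℝ), ∀ i, ∀ hi : i ∈ I11,
          HasDerivWithinAt (fun s => x s i)
            ((J i - R i) *ᵥ grad (Hn i) (x t i)
              - (∑ k, B i k • grad (He k) (η t k))
              + (Q ⟨i, Finset.mem_union_left _ hi⟩)⁻¹ *ᵥ
                  ξ t ⟨i, Finset.mem_union_left _ hi⟩ + δ i)
            (Ici 0) t) →
        (∀ t ∈ Ici (0 : ℝ), ∀ i ∈ I12,
          HasDerivWithinAt (fun s => x s i)
            ((J i - R i) *ᵥ grad (Hn i) (x t i)
              - (∑ k, B i k • grad (He k) (η t k)) + δ i)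
            (Ici 0) t) →
        (∀ t ∈ Ici (0 : ℝ), ∀ i, ∀ hi : i ∈ I21,
          (0 : Fin n → ℝ) = (J i - R i) *ᵥ grad (Hn i) (x t i)
            - (∑ k, B i k • grad (He k) (η t k))
            + (Q ⟨i, Finset.mem_union_right _ hi⟩)⁻¹ *ᵥ
                ξ t ⟨i, Finset.mem_union_right _ hi⟩ + δ i) →
        (∀ t ∈ Ici (0 : ℝ), ∀ i ∈ I22,
          (0 : Fin n → ℝ) = (J i - R i) *ᵥ grad (Hn i) (x t i)
            - (∑ k, B i k • grad (He k) (η t k)) + δ i) →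
        -- the distributed controller dynamics:
        (∀ t ∈ Ici (0 : ℝ), ∀ i : {i // i ∈ I11 ∪ I21},
          HasDerivWithinAt (fun s => ξ s i)
            ((∑ j, if Gc.Adj i j then ξ t j - ξ t i else 0)
              + (Q i)⁻¹ *ᵥ (ystar - grad (Hn i.1) (x t i.1))) (Ici 0) t) →
        -- starting in U:
        (x 0, η 0, ξ 0) ∈ U →
        -- convergence to a closed-loop equilibrium with outputs equal to y*:
        (∃ (xt : Fin N → Fin n → ℝ) (ηt : Fin M → Fin n → ℝ)
          (ξt : {i // i ∈ I11 ∪ I21} → Fin n → ℝ),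
          (∀ i, xt i ∈ Ωn) ∧ (∀ k, ηt k ∈ Ωe) ∧
          (∀ k, ∑ i, B i k • grad (Hn i) (xt i) = 0) ∧
          (∀ i, ∀ hi : i ∈ I11, (0 : Fin n → ℝ) =
            (J i - R i) *ᵥ grad (Hn i) (xt i)
              - (∑ k, B i k • grad (He k) (ηt k))
              + (Q ⟨i, Finset.mem_union_left _ hi⟩)⁻¹ *ᵥ
                  ξt ⟨i, Finset.mem_union_left _ hi⟩ + δ i) ∧
          (∀ i ∈ I12, (0 : Fin n → ℝ) =
            (J i - R i) *ᵥ grad (Hn i) (xt i)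
              - (∑ k, B i k • grad (He k) (ηt k)) + δ i) ∧
          (∀ i, ∀ hi : i ∈ I21, (0 : Fin n → ℝ) =
            (J i - R i) *ᵥ grad (Hn i) (xt i)
              - (∑ k, B i k • grad (He k) (ηt k))
              + (Q ⟨i, Finset.mem_union_right _ hi⟩)⁻¹ *ᵥ
                  ξt ⟨i, Finset.mem_union_right _ hi⟩ + δ i) ∧
          (∀ i ∈ I22, (0 : Fin n → ℝ) =
            (J i - R i) *ᵥ grad (Hn i) (xt i)
              - (∑ k, B i k • grad (He k) (ηt k)) + δ i) ∧
          (∀ i : {i // i ∈ I11 ∪ I21},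
            (∑ j, if Gc.Adj i j then ξt j - ξt i else 0)
              + (Q i)⁻¹ *ᵥ (ystar - grad (Hn i.1) (xt i.1)) = 0) ∧
          Tendsto x atTop (𝓝 xt) ∧ Tendsto η atTop (𝓝 ηt) ∧
          Tendsto ξ atTop (𝓝 ξt) ∧
          ∀ i, grad (Hn i) (xt i) = ystar) ∧
        -- the controls converge to the optimal allocation ū_i = Q_i⁻¹ λ:
        (∀ i : {i // i ∈ I11 ∪ I21},
          Tendsto (fun t => (Q i)⁻¹ *ᵥ ξ t i) atTop (𝓝 ((Q i)⁻¹ *ᵥ lam))) ∧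
        -- which minimizes the cost subject to the balance constraint:
        (∀ u : {i // i ∈ I11 ∪ I21} → Fin n → ℝ,
          (∑ i, u i) = -(∑ i, (J i - R i) *ᵥ ystar + ∑ i, δ i) →
          (1 / 2) * ∑ i, ((Q i)⁻¹ *ᵥ lam) ⬝ᵥ (Q i *ᵥ ((Q i)⁻¹ *ᵥ lam)) ≤
          (1 / 2) * ∑ i, u i ⬝ᵥ (Q i *ᵥ u i)) := by
  obtain rfl : ξbar = fun _ => lam := funext hξbar
  exact output_agreement_optimal_distributed_control_general B hB1 J R hJ hR δ (fun _ => Ωn)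
    (fun _ => hΩno) (fun _ => Ωe) (fun _ => hΩeo) Hn hHnC hHnconv He hHeC hHeconv I11 I12 I21 I22
    hpart h1112 h1122 h1221 h2122 Q hQ ystar lam hlam xbar ηbar hxbar hηbar hxbarout hfeasc hfeasu
    Gc hGc
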